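/- arXiv:2112.14803 — 2 statements merged into one kernel-verified Lean document; each statement's English description precedes it below -/
import Mathlib

section
/- For any prime power q ≥ 5, the q+1 tangents to the twisted cubic C form a single orbit of lines under G_q, and the stabilizer in G_q of any tangent has order q(q−1). Moreover, the stabilizer in G_q of the tangent T_∞ consists exactly of the projectivities induced by the matrices with rows (1,0,0,0), (3b,d,0,0), (3b²,2bd,d²,0), (b³,b²d,bd²,d³), where b ∈ F_q and d ∈ F_q^*. -/
open Matrix Submodule

noncomputable section

/-- Row-vector action of an invertible matrix on subspaces of `F^4`:
a projectivity of `PG(3,q)` induced by the matrix. -/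
def projAct (F : Type) [Field F] (A : GL (Fin 4) F) :
    Submodule F (Fin 4 → F) → Submodule F (Fin 4 → F) :=
  fun W => W.map (Matrix.vecMulLinear (A : Matrix (Fin 4) (Fin 4) F))

/-- Representative vectors of the points of the twisted cubic. -/
def cubicVecs (F : Type) [Field F] : Set (Fin 4 → F) :=
  {v | (∃ t : F, v = ![t ^ 3, t ^ 2, t, 1]) ∨ v = ![1, 0, 0, 0]}

/-- The twisted cubic, as a set of projective points (1-dimensional subspaces). -/
def twistedCubic (F : Type) [Field F] : Set (Submodule F (Fin 4 → F)) :=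
  (fun v => Submodule.span F {v}) '' cubicVecs F

/-- The group `G_q` of projectivities fixing the twisted cubic, modeled as those maps
on subspaces that are induced by an invertible matrix and map the cubic onto itself. -/
def Gq (F : Type) [Field F] :
    Set ((Submodule F (Fin 4 → F)) → (Submodule F (Fin 4 → F))) :=
  {f | (∃ A : GL (Fin 4) F, f = projAct F A) ∧ f '' twistedCubic F = twistedCubic F}

def isPoint (F : Type) [Field F] (W : Submodule F (Fin 4 → F)) : Prop :=
  Module.finrank F W = 1

def isLine (F : Type) [Field F] (W : Submodule F (Fin 4 → F)) : Prop :=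
  Module.finrank F W = 2

/-- The orbit of a line under `G_q`. -/
def lineOrbit (F : Type) [Field F] (ℓ : Submodule F (Fin 4 → F)) :
    Set (Submodule F (Fin 4 → F)) :=
  {m | ∃ f ∈ Gq F, f ℓ = m}

/-- The stabilizer of a line in `G_q`. -/
def lineStab (F : Type) [Field F] (ℓ : Submodule F (Fin 4 → F)) :
    Set ((Submodule F (Fin 4 → F)) → (Submodule F (Fin 4 → F))) :=
  {f ∈ Gq F | f ℓ = ℓ}

/-- The linear form `y ↦ c0 y0 + c1 y1 + c2 y2 + c3 y3` defining a plane. -/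
def planeForm (F : Type) [Field F] (c : Fin 4 → F) : (Fin 4 → F) →ₗ[F] F where
  toFun y := c 0 * y 0 + c 1 * y 1 + c 2 * y 2 + c 3 * y 3
  map_add' a b := by simp only [Pi.add_apply]; ring
  map_smul' r a := by simp only [Pi.smul_apply, smul_eq_mul, RingHom.id_apply]; ring

/-- The plane `π(c0,c1,c2,c3)`. -/
def planeOf (F : Type) [Field F] (c : Fin 4 → F) : Submodule F (Fin 4 → F) :=
  LinearMap.ker (planeForm F c)

/-- The null polarity `𝔄`: the polar subspace of `W` w.r.t. the bilinear form
sending a point `(x0:x1:x2:x3)` to the plane `π(x3, −3x2, 3x1, −x0)`. -/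
def nullPolarity (F : Type) [Field F] (W : Submodule F (Fin 4 → F)) :
    Submodule F (Fin 4 → F) :=
  ⨅ x ∈ (W : Set (Fin 4 → F)), planeOf F ![x 3, -(3 * x 2), 3 * x 1, -(x 0)]

/-- The tangent line to the twisted cubic at `P(t)`, `t ∈ F`. -/
def tangentAt (F : Type) [Field F] (t : F) : Submodule F (Fin 4 → F) :=
  Submodule.span F {![t ^ 3, t ^ 2, t, 1], ![3 * t ^ 2, 2 * t, 1, 0]}

/-- The tangent line to the twisted cubic at `P(∞)`. -/
def tangentAtInf (F : Type) [Field F] : Submodule F (Fin 4 → F) :=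
  Submodule.span F {![1, 0, 0, 0], ![0, 1, 0, 0]}

def isTangent (F : Type) [Field F] (ℓ : Submodule F (Fin 4 → F)) : Prop :=
  (∃ t : F, ℓ = tangentAt F t) ∨ ℓ = tangentAtInf F

/-- The osculating plane at `P(t)`, `t ∈ F`. -/
def oscPlane (F : Type) [Field F] (t : F) : Submodule F (Fin 4 → F) :=
  planeOf F ![1, -(3 * t), 3 * t ^ 2, -(t ^ 3)]

/-- The osculating plane at `P(∞)`. -/
def oscPlaneInf (F : Type) [Field F] : Submodule F (Fin 4 → F) :=
  planeOf F ![0, 0, 0, 1]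

def isOscPlane (F : Type) [Field F] (π : Submodule F (Fin 4 → F)) : Prop :=
  (∃ t : F, π = oscPlane F t) ∨ π = oscPlaneInf F

/-- A real chord: the line joining two distinct points of the twisted cubic. -/
def isRealChord (F : Type) [Field F] (ℓ : Submodule F (Fin 4 → F)) : Prop :=
  ∃ u ∈ cubicVecs F, ∃ v ∈ cubicVecs F,
    Submodule.span F {u} ≠ Submodule.span F {v} ∧ ℓ = Submodule.span F {u, v}

/-- A real axis: the intersection of two distinct osculating planes. -/
def isRealAxis (F : Type) [Field F] (ℓ : Submodule F (Fin 4 → F)) : Prop :=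
  ∃ π₁ π₂ : Submodule F (Fin 4 → F),
    isOscPlane F π₁ ∧ isOscPlane F π₂ ∧ π₁ ≠ π₂ ∧ ℓ = π₁ ⊓ π₂

/-- The `F_{q²}`-extension of a subspace of `F^4`. -/
def extendSub (F K : Type) [Field F] [Field K] [Algebra F K]
    (W : Submodule F (Fin 4 → F)) : Submodule K (Fin 4 → K) :=
  Submodule.span K ((fun v i => algebraMap F K (v i)) '' (W : Set (Fin 4 → F)))

/-- An external line: a line containing no point of the twisted cubic. -/
def isExternal (F : Type) [Field F] (ℓ : Submodule F (Fin 4 → F)) : Prop :=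
  isLine F ℓ ∧ ∀ P ∈ twistedCubic F, ¬ P ≤ ℓ

/-- An imaginary chord: a line disjoint from the cubic whose `F_{q²}`-extension joins a
pair of Frobenius-conjugate points `P(t)`, `P(t^q)` of the cubic over `F_{q²}`. -/
def isImagChord (F K : Type) [Field F] [Field K] [Algebra F K] (q : ℕ)
    (ℓ : Submodule F (Fin 4 → F)) : Prop :=
  isExternal F ℓ ∧
  ∃ t : K, t ∉ Set.range (algebraMap F K) ∧
    extendSub F K ℓ =
      Submodule.span K
        ({![t ^ 3, t ^ 2, t, 1], ![(t ^ q) ^ 3, (t ^ q) ^ 2, t ^ q, 1]} :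
          Set (Fin 4 → K))

/-- An imaginary axis: a line whose `F_{q²}`-extension is the intersection of a pair of
Frobenius-conjugate osculating planes `π_osc(t)`, `π_osc(t^q)` over `F_{q²}`. -/
def isImagAxis (F K : Type) [Field F] [Field K] [Algebra F K] (q : ℕ)
    (ℓ : Submodule F (Fin 4 → F)) : Prop :=
  isLine F ℓ ∧
  ∃ t : K, t ∉ Set.range (algebraMap F K) ∧
    extendSub F K ℓ =
      planeOf K ![1, -(3 * t), 3 * t ^ 2, -(t ^ 3)] ⊓
        planeOf K ![1, -(3 * t ^ q), 3 * (t ^ q) ^ 2, -((t ^ q) ^ 3)]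

/-- A unisecant: a line meeting the twisted cubic in exactly one point. -/
def isUnisecant (F : Type) [Field F] (ℓ : Submodule F (Fin 4 → F)) : Prop :=
  isLine F ℓ ∧ ∃! P, P ∈ twistedCubic F ∧ P ≤ ℓ

/-- A `UΓ`-line: a non-tangent unisecant lying in some osculating plane. -/
def isUGamma (F : Type) [Field F] (ℓ : Submodule F (Fin 4 → F)) : Prop :=
  isUnisecant F ℓ ∧ ¬ isTangent F ℓ ∧ ∃ π, isOscPlane F π ∧ ℓ ≤ π

/-- A `UnΓ`-line: a non-tangent unisecant lying in no osculating plane. -/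
def isUnGamma (F : Type) [Field F] (ℓ : Submodule F (Fin 4 → F)) : Prop :=
  isUnisecant F ℓ ∧ ¬ isTangent F ℓ ∧ ∀ π, isOscPlane F π → ¬ ℓ ≤ π

/-- An `EΓ`-line: an external line, other than an imaginary chord, lying in some
osculating plane. -/
def isEGamma (F K : Type) [Field F] [Field K] [Algebra F K] (q : ℕ)
    (ℓ : Submodule F (Fin 4 → F)) : Prop :=
  isExternal F ℓ ∧ ¬ isImagChord F K q ℓ ∧ ∃ π, isOscPlane F π ∧ ℓ ≤ π

/-- For `q ≡ 0 (mod 3)`: the axis of `Γ`, the line `x0 = x3 = 0`. -/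
def axisLine (F : Type) [Field F] : Submodule F (Fin 4 → F) :=
  Submodule.span F {![0, 1, 0, 0], ![0, 0, 1, 0]}

/-- For `q ≡ 0 (mod 3)`: an `EA`-line, i.e. an external line, other than an imaginary
chord and other than the axis of `Γ`, meeting the axis of `Γ`. -/
def isEA (F K : Type) [Field F] [Field K] [Algebra F K] (q : ℕ)
    (ℓ : Submodule F (Fin 4 → F)) : Prop :=
  isExternal F ℓ ∧ ¬ isImagChord F K q ℓ ∧ ℓ ≠ axisLine F ∧ ℓ ⊓ axisLine F ≠ ⊥

end


open Polynomial in
lemma aux_cubic {F : Type} [Field F] [Fintype F] (hq : 5 ≤ Fintype.card F) (a b c d : F)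
    (h : ∀ t : F, t ≠ 0 → a * t ^ 3 + b * t ^ 2 + c * t + d = 0) :
    a = 0 ∧ b = 0 ∧ c = 0 ∧ d = 0 := by
  classical
  have hp : (C a * X ^ 3 + C b * X ^ 2 + C c * X + C d : F[X]) = 0 := by
    apply Polynomial.eq_zero_of_natDegree_lt_card_of_eval_eq_zero' _ (Finset.univ.erase (0 : F))
    · intro t ht
      simpa using h t (by simpa using ht)
    · rw [Finset.card_erase_of_mem (Finset.mem_univ _), Finset.card_univ]
      have := Polynomial.natDegree_cubic_le (a := a) (b := b) (c := c) (d := d)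
      omega
  refine ⟨?_, ?_, ?_, ?_⟩
  · simpa [coeff_X, coeff_C] using congrArg (fun p => Polynomial.coeff p 3) hp
  · simpa [coeff_X, coeff_C] using congrArg (fun p => Polynomial.coeff p 2) hp
  · simpa [coeff_X, coeff_C] using congrArg (fun p => Polynomial.coeff p 1) hp
  · simpa [coeff_X, coeff_C] using congrArg (fun p => Polynomial.coeff p 0) hp

def tcM {F : Type} [Field F] (b d : F) : Matrix (Fin 4) (Fin 4) F :=
  !![1, 0, 0, 0;
     3 * b, d, 0, 0;
     3 * b ^ 2, 2 * b * d, d ^ 2, 0;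
     b ^ 3, b ^ 2 * d, b * d ^ 2, d ^ 3]

lemma tcM_mul {F : Type} [Field F] (b d b' d' : F) :
    tcM b d * tcM b' d' = tcM (b + d * b') (d * d') := by
  ext i j
  fin_cases i <;> fin_cases j <;> simp [tcM, Matrix.mul_apply, Fin.sum_univ_four] <;> ring

lemma tcM_one {F : Type} [Field F] : tcM (0 : F) 1 = 1 := by
  ext i j
  fin_cases i <;> fin_cases j <;> simp [tcM]

def tcG {F : Type} [Field F] (b d : F) (hd : d ≠ 0) : GL (Fin 4) F :=
  ⟨tcM b d, tcM (-(b / d)) d⁻¹,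
    by rw [tcM_mul, ← tcM_one]; congr 1 <;> field_simp; ring,
    by rw [tcM_mul, ← tcM_one]; congr 1 <;> field_simp; ring⟩

def tcJm (F : Type) [Field F] : Matrix (Fin 4) (Fin 4) F :=
  !![0, 0, 0, 1; 0, 0, 1, 0; 0, 1, 0, 0; 1, 0, 0, 0]

lemma tcJm_mul {F : Type} [Field F] : tcJm F * tcJm F = 1 := by
  ext i j
  fin_cases i <;> fin_cases j <;> simp [tcJm, Matrix.mul_apply, Fin.sum_univ_four]

def tcJ (F : Type) [Field F] : GL (Fin 4) F := ⟨tcJm F, tcJm F, tcJm_mul, tcJm_mul⟩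

lemma projAct_mul {F : Type} [Field F] (A B : GL (Fin 4) F) (W : Submodule F (Fin 4 → F)) :
    projAct F (A * B) W = projAct F B (projAct F A W) := by
  unfold projAct
  rw [← Submodule.map_comp]
  congr 1
  apply LinearMap.ext
  intro v
  simp only [LinearMap.comp_apply, Matrix.vecMulLinear_apply, Matrix.vecMul_vecMul]
  rfl

lemma projAct_one {F : Type} [Field F] (W : Submodule F (Fin 4 → F)) :
    projAct F 1 W = W := by
  unfold projAct
  convert Submodule.map_id W using 2
  ext v i
  simp

lemma projAct_smul {F : Type} [Field F] (A B : GL (Fin 4) F) (k : F) (hk : k ≠ 0)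
    (h : (A : Matrix (Fin 4) (Fin 4) F) = k • (B : Matrix (Fin 4) (Fin 4) F)) :
    projAct F A = projAct F B := by
  funext W
  unfold projAct
  rw [h]
  have : Matrix.vecMulLinear (k • (B : Matrix (Fin 4) (Fin 4) F)) =
      k • Matrix.vecMulLinear (B : Matrix (Fin 4) (Fin 4) F) := by
    ext v i
    simp
  rw [this, Submodule.map_smul _ _ _ hk]

lemma projAct_inj {F : Type} [Field F] (A : GL (Fin 4) F) :
    Function.Injective (projAct F A) := by
  intro U V h
  have := congrArg (projAct F A⁻¹) h
  rwa [← projAct_mul, ← projAct_mul, mul_inv_cancel, projAct_one, projAct_one] at this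

lemma projAct_inv {F : Type} [Field F] (A : GL (Fin 4) F) (W : Submodule F (Fin 4 → F)) :
    projAct F A⁻¹ (projAct F A W) = W := by
  rw [← projAct_mul, mul_inv_cancel, projAct_one]

lemma projAct_inv' {F : Type} [Field F] (A : GL (Fin 4) F) (W : Submodule F (Fin 4 → F)) :
    projAct F A (projAct F A⁻¹ W) = W := by
  rw [← projAct_mul, inv_mul_cancel, projAct_one]

lemma projAct_span {F : Type} [Field F] (A : GL (Fin 4) F) (s : Set (Fin 4 → F)) :
    projAct F A (Submodule.span F s) =
      Submodule.span F ((fun v => v ᵥ* (A : Matrix (Fin 4) (Fin 4) F)) '' s) := by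
  unfold projAct
  rw [Submodule.map_span]
  rfl

lemma projAct_span1 {F : Type} [Field F] (A : GL (Fin 4) F) (v : Fin 4 → F) :
    projAct F A (Submodule.span F {v}) =
      Submodule.span F {v ᵥ* (A : Matrix (Fin 4) (Fin 4) F)} := by
  rw [projAct_span, Set.image_singleton]

lemma projAct_span2 {F : Type} [Field F] (A : GL (Fin 4) F) (v w : Fin 4 → F) :
    projAct F A (Submodule.span F {v, w}) =
      Submodule.span F {v ᵥ* (A : Matrix (Fin 4) (Fin 4) F),
        w ᵥ* (A : Matrix (Fin 4) (Fin 4) F)} := by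
  rw [projAct_span, Set.image_pair]

/-- `A` preserves the cubic. -/
def Pres {F : Type} [Field F] (A : GL (Fin 4) F) : Prop :=
  projAct F A '' twistedCubic F = twistedCubic F

lemma Pres.mul {F : Type} [Field F] {A B : GL (Fin 4) F} (hA : Pres A) (hB : Pres B) :
    Pres (A * B) := by
  unfold Pres at *
  have : projAct F (A * B) = projAct F B ∘ projAct F A := by
    funext W; exact projAct_mul A B W
  rw [this, Set.image_comp, hA, hB]

lemma Pres.inv {F : Type} [Field F] {A : GL (Fin 4) F} (hA : Pres A) : Pres A⁻¹ := by
  unfold Pres at *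
  conv_lhs => rw [← hA]
  rw [← Set.image_comp]
  have : projAct F A⁻¹ ∘ projAct F A = id := by
    funext W; exact projAct_inv A W
  rw [this, Set.image_id]

lemma pres_of {F : Type} [Field F] [Fintype F] (A : GL (Fin 4) F)
    (h : ∀ v ∈ cubicVecs F, ∃ w ∈ cubicVecs F, ∃ c : F, c ≠ 0 ∧
      v ᵥ* (A : Matrix (Fin 4) (Fin 4) F) = c • w) : Pres A := by
  unfold Pres
  have hfin : (twistedCubic F).Finite := (Set.toFinite (cubicVecs F)).image _
  apply Set.eq_of_subset_of_ncard_le _ _ hfin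
  · rintro _ ⟨_, ⟨v, hv, rfl⟩, rfl⟩
    obtain ⟨w, hw, c, hc, e⟩ := h v hv
    refine ⟨w, hw, ?_⟩
    simp only [projAct_span1, e]
    exact (Submodule.span_singleton_smul_eq (IsUnit.mk0 c hc) w).symm
  · rw [Set.ncard_image_of_injective _ (projAct_inj A)]

lemma pres_tcG {F : Type} [Field F] [Fintype F] (b d : F) (hd : d ≠ 0) :
    Pres (tcG b d hd) := by
  apply pres_of
  rintro v (⟨t, rfl⟩ | rfl)
  · refine ⟨_, Or.inl ⟨(t + b) / d, rfl⟩, d ^ 3, by positivity, ?_⟩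
    ext i
    fin_cases i <;> simp [tcG, tcM, Matrix.vecMul, dotProduct, Fin.sum_univ_four] <;>
      field_simp <;> ring
  · refine ⟨_, Or.inr rfl, 1, one_ne_zero, ?_⟩
    ext i
    fin_cases i <;> simp [tcG, tcM, Matrix.vecMul, dotProduct, Fin.sum_univ_four]

lemma pres_tcJ {F : Type} [Field F] [Fintype F] : Pres (tcJ F) := by
  apply pres_of
  rintro v (⟨t, rfl⟩ | rfl)
  · by_cases ht : t = 0
    · subst ht
      refine ⟨_, Or.inr rfl, 1, one_ne_zero, ?_⟩
      ext i
      fin_cases i <;> simp [tcJ, tcJm, Matrix.vecMul, dotProduct, Fin.sum_univ_four]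
    · refine ⟨_, Or.inl ⟨t⁻¹, rfl⟩, t ^ 3, by positivity, ?_⟩
      ext i
      fin_cases i <;> simp [tcJ, tcJm, Matrix.vecMul, dotProduct, Fin.sum_univ_four] <;>
        field_simp
  · refine ⟨_, Or.inl ⟨0, rfl⟩, 1, one_ne_zero, ?_⟩
    ext i
    fin_cases i <;> simp [tcJ, tcJm, Matrix.vecMul, dotProduct, Fin.sum_univ_four]

lemma pres_eqs {F : Type} [Field F] {A : GL (Fin 4) F} (hA : Pres A) (v : Fin 4 → F)
    (hv : v ∈ cubicVecs F) :
    let w := v ᵥ* (A : Matrix (Fin 4) (Fin 4) F)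
    w 0 * w 2 = w 1 ^ 2 ∧ w 1 * w 3 = w 2 ^ 2 := by
  intro w
  have h : projAct F A (Submodule.span F {v}) ∈ twistedCubic F := by
    rw [← hA]; exact ⟨_, ⟨v, hv, rfl⟩, rfl⟩
  obtain ⟨u, hu, e⟩ := h
  rw [projAct_span1] at e
  have hw : w ∈ Submodule.span F {u} := by
    simp only at e
    rw [e]; exact Submodule.mem_span_singleton_self _
  obtain ⟨c, hc⟩ := Submodule.mem_span_singleton.1 hw
  rw [← hc]
  rcases hu with ⟨t, rfl⟩ | rfl
  · constructor <;> simp <;> ring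
  · simp

lemma row_of_fix {F : Type} [Field F] {A : GL (Fin 4) F} (v : Fin 4 → F)
    (h : projAct F A (Submodule.span F {v}) = Submodule.span F {v}) :
    ∃ c : F, v ᵥ* (A : Matrix (Fin 4) (Fin 4) F) = c • v := by
  rw [projAct_span1] at h
  have : v ᵥ* (A : Matrix (Fin 4) (Fin 4) F) ∈ Submodule.span F {v} := by
    rw [← h]; exact Submodule.mem_span_singleton_self _
  obtain ⟨c, hc⟩ := Submodule.mem_span_singleton.1 this
  exact ⟨c, hc.symm⟩

lemma key_diag {F : Type} [Field F] [Fintype F] (hq : 5 ≤ Fintype.card F)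
    (A : GL (Fin 4) F) (hA : Pres A)
    (h0 : projAct F A (Submodule.span F {![1, 0, 0, 0]}) = Submodule.span F {![1, 0, 0, 0]})
    (h3 : projAct F A (Submodule.span F {![0, 0, 0, 1]}) = Submodule.span F {![0, 0, 0, 1]}) :
    ∃ k e : F, k ≠ 0 ∧ e ≠ 0 ∧
      (A : Matrix (Fin 4) (Fin 4) F) = k • tcM 0 e := by
  obtain ⟨a, ha⟩ := row_of_fix _ h0
  obtain ⟨c, hc⟩ := row_of_fix _ h3
  set M : Matrix (Fin 4) (Fin 4) F := (A : Matrix (Fin 4) (Fin 4) F) with hM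
  have hdet : M.det ≠ 0 := by
    have := (Matrix.isUnits_det_units A)
    exact this.ne_zero
  have r0 : ∀ j, M 0 j = a * ![1, 0, 0, 0] j := by
    intro j
    have := congrFun ha j
    simpa [Matrix.vecMul, dotProduct, Fin.sum_univ_four] using this
  have r3 : ∀ j, M 3 j = c * ![0, 0, 0, 1] j := by
    intro j
    have := congrFun hc j
    simpa [Matrix.vecMul, dotProduct, Fin.sum_univ_four] using this
  have m00 : M 0 0 = a := by simpa using r0 0
  have m01 : M 0 1 = 0 := by simpa using r0 1
  have m02 : M 0 2 = 0 := by simpa using r0 2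
  have m03 : M 0 3 = 0 := by simpa using r0 3
  have m30 : M 3 0 = 0 := by simpa using r3 0
  have m31 : M 3 1 = 0 := by simpa using r3 1
  have m32 : M 3 2 = 0 := by simpa using r3 2
  have m33 : M 3 3 = c := by simpa using r3 3
  have hdet2 : M.det = a * c * (M 1 1 * M 2 2 - M 1 2 * M 2 1) := by
    rw [Matrix.det_succ_row_zero]
    simp [Fin.sum_univ_four, Matrix.det_fin_three, Fin.succAbove, m00, m01, m02, m03, m30, m31,
      m32, m33]
    ring
  rw [hdet2] at hdet
  have ha0 : a ≠ 0 := by rintro rfl; simp at hdet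
  have hc0 : c ≠ 0 := by rintro rfl; simp at hdet
  have E : ∀ t : F, t ≠ 0 →
      (a * t ^ 2 + M 1 0 * t + M 2 0) * (M 1 2 * t + M 2 2) = (M 1 1 * t + M 2 1) ^ 2 ∧
      (M 1 1 * t + M 2 1) * (M 1 3 * t ^ 2 + M 2 3 * t + c) = t * (M 1 2 * t + M 2 2) ^ 2 := by
    intro t ht
    have := pres_eqs hA ![t ^ 3, t ^ 2, t, 1] (Or.inl ⟨t, rfl⟩)
    simp only [← hM, Matrix.vecMul, dotProduct, Fin.sum_univ_four, m00, m01, m02, m03, m30, m31,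
      m32, m33] at this
    simp at this
    obtain ⟨e1, e2⟩ := this
    constructor
    · apply mul_left_cancel₀ (pow_ne_zero 2 ht)
      linear_combination e1
    · apply mul_left_cancel₀ ht
      linear_combination e2
  obtain ⟨p3, p2, p1, p0⟩ := aux_cubic hq (a * M 1 2)
    (a * M 2 2 + M 1 0 * M 1 2 - M 1 1 ^ 2)
    (M 1 0 * M 2 2 + M 2 0 * M 1 2 - 2 * M 1 1 * M 2 1)
    (M 2 0 * M 2 2 - M 2 1 ^ 2)
    (fun t ht => by linear_combination (E t ht).1)
  obtain ⟨s3, s2, s1, s0⟩ := aux_cubic hq (M 1 1 * M 1 3 - M 1 2 ^ 2)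
    (M 1 1 * M 2 3 + M 2 1 * M 1 3 - 2 * M 1 2 * M 2 2)
    (M 1 1 * c + M 2 1 * M 2 3 - M 2 2 ^ 2)
    (M 2 1 * c)
    (fun t ht => by linear_combination (E t ht).2)
  have m12 : M 1 2 = 0 := by simpa [ha0] using p3
  have m21 : M 2 1 = 0 := by simpa [hc0] using s0
  simp only [m12, m21] at hdet p2 p1 p0 s3 s2 s1
  have m11 : M 1 1 ≠ 0 := by intro h; simp [h] at hdet
  have m22 : M 2 2 ≠ 0 := by intro h; simp [h] at hdet
  have m13 : M 1 3 = 0 := by simpa [m11] using s3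
  have m23 : M 2 3 = 0 := by simpa [m11] using s2
  have m10 : M 1 0 = 0 := by simpa [m22] using p1
  have m20 : M 2 0 = 0 := by simpa [m22] using p0
  have q1 : a * M 2 2 = M 1 1 ^ 2 := by linear_combination p2
  have q2 : M 1 1 * c = M 2 2 ^ 2 := by linear_combination s1
  have z1 : M 1 1 = M 2 2 ^ 2 / c := by field_simp; exact q2
  have z0 : a = M 2 2 ^ 3 / c ^ 2 := by
    apply mul_right_cancel₀ m22
    rw [q1, z1]; field_simp
  refine ⟨a, c / M 2 2, ha0, div_ne_zero hc0 m22, ?_⟩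
  ext i j
  fin_cases i <;> fin_cases j <;>
    simp [tcM, m00, m01, m02, m03, m10, m12, m13, m20, m21, m23, m30, m31, m32, m33]
  · rw [z1, z0]; field_simp
  · rw [z0]; field_simp
  · rw [z0]; field_simp

lemma e3_mem {F : Type} [Field F] : (![0, 0, 0, 1] : Fin 4 → F) ∈ cubicVecs F :=
  Or.inl ⟨0, by simp⟩

lemma span_P_ne {F : Type} [Field F] (t : F) :
    Submodule.span F {![t ^ 3, t ^ 2, t, 1]} ≠ Submodule.span F {![1, 0, 0, 0]} := by
  intro h
  have : ![t ^ 3, t ^ 2, t, 1] ∈ Submodule.span F {(![1, 0, 0, 0] : Fin 4 → F)} := by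
    rw [← h]; exact Submodule.mem_span_singleton_self _
  obtain ⟨c, hc⟩ := Submodule.mem_span_singleton.1 this
  simpa using congrFun hc 3

lemma span_P_inj {F : Type} [Field F] (s t : F)
    (h : Submodule.span F {![s ^ 3, s ^ 2, s, 1]} = Submodule.span F {![t ^ 3, t ^ 2, t, 1]}) :
    s = t := by
  have : ![s ^ 3, s ^ 2, s, 1] ∈ Submodule.span F {![t ^ 3, t ^ 2, t, 1]} := by
    rw [← h]; exact Submodule.mem_span_singleton_self _
  obtain ⟨c, hc⟩ := Submodule.mem_span_singleton.1 this
  have h3 : c = 1 := by simpa using congrFun hc 3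
  have h2 := congrFun hc 2
  simp [h3] at h2
  exact h2.symm

lemma act_P {F : Type} [Field F] (b d : F) (hd : d ≠ 0) (t : F) :
    projAct F (tcG b d hd) (Submodule.span F {![t ^ 3, t ^ 2, t, 1]}) =
      Submodule.span F {![((t + b) / d) ^ 3, ((t + b) / d) ^ 2, (t + b) / d, 1]} := by
  rw [projAct_span1]
  have : ![t ^ 3, t ^ 2, t, 1] ᵥ* ((tcG b d hd : GL (Fin 4) F) : Matrix (Fin 4) (Fin 4) F) =
      d ^ 3 • ![((t + b) / d) ^ 3, ((t + b) / d) ^ 2, (t + b) / d, 1] := by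
    ext i
    fin_cases i <;> simp [tcG, tcM, Matrix.vecMul, dotProduct, Fin.sum_univ_four] <;>
      field_simp <;> ring
  rw [this]
  exact Submodule.span_singleton_smul_eq (IsUnit.mk0 _ (pow_ne_zero 3 hd)) _

lemma act_inf {F : Type} [Field F] (b d : F) (hd : d ≠ 0) :
    projAct F (tcG b d hd) (Submodule.span F {![1, 0, 0, 0]}) =
      Submodule.span F {![1, 0, 0, 0]} := by
  rw [projAct_span1]
  congr 2
  ext i
  fin_cases i <;> simp [tcG, tcM, Matrix.vecMul, dotProduct, Fin.sum_univ_four]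

lemma key_fix {F : Type} [Field F] [Fintype F] (hq : 5 ≤ Fintype.card F)
    (A : GL (Fin 4) F) (hA : Pres A)
    (h0 : projAct F A (Submodule.span F {![1, 0, 0, 0]}) = Submodule.span F {![1, 0, 0, 0]}) :
    ∃ (b d : F) (hd : d ≠ 0), projAct F A = projAct F (tcG b d hd) := by
  have h : projAct F A (Submodule.span F {![0, 0, 0, 1]}) ∈ twistedCubic F := by
    rw [← hA]; exact ⟨_, ⟨_, e3_mem, rfl⟩, rfl⟩
  obtain ⟨u, hu, e⟩ := h
  have e30 : (![0, 0, 0, 1] : Fin 4 → F) = ![(0 : F) ^ 3, 0 ^ 2, 0, 1] := by simp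
  rcases hu with ⟨s, rfl⟩ | rfl
  · have hB : Pres (A * tcG (-s) 1 one_ne_zero) := hA.mul (pres_tcG _ _ _)
    obtain ⟨k, d, hk, hd, E⟩ := key_diag hq _ hB
      (by rw [projAct_mul, h0, act_inf])
      (by rw [projAct_mul, ← e]
          simp only
          rw [act_P, e30]; simp)
    refine ⟨d * s, d, hd, projAct_smul _ _ k hk ?_⟩
    have E2 : (A : Matrix (Fin 4) (Fin 4) F) * tcM (-s) 1 = k • tcM 0 d := E
    have E3 := congrArg (fun X => X * tcM s 1) E2
    simp only [Matrix.mul_assoc, tcM_mul, Matrix.smul_mul] at E3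
    simp [tcM_one] at E3
    exact E3
  · exfalso
    simp only at e
    rw [← h0] at e
    have := projAct_inj A e
    rw [e30] at this
    exact span_P_ne 0 this.symm

lemma inf_tangent {F : Type} [Field F] (b d : F) (hd : d ≠ 0) :
    projAct F (tcG b d hd) (tangentAtInf F) = tangentAtInf F := by
  unfold tangentAtInf
  rw [projAct_span2]
  have e0 : (![1, 0, 0, 0] : Fin 4 → F) ᵥ* ((tcG b d hd : GL (Fin 4) F) : Matrix (Fin 4) (Fin 4) F)
      = ![1, 0, 0, 0] := by
    ext i
    fin_cases i <;> simp [tcG, tcM, Matrix.vecMul, dotProduct, Fin.sum_univ_four]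
  have e1 : (![0, 1, 0, 0] : Fin 4 → F) ᵥ* ((tcG b d hd : GL (Fin 4) F) : Matrix (Fin 4) (Fin 4) F)
      = ![3 * b, d, 0, 0] := by
    ext i
    fin_cases i <;> simp [tcG, tcM, Matrix.vecMul, dotProduct, Fin.sum_univ_four]
  rw [e0, e1]
  apply le_antisymm <;> rw [Submodule.span_le] <;> rintro v (rfl | rfl)
  · exact Submodule.subset_span (by simp)
  · refine Submodule.mem_span_pair.2 ⟨3 * b, d, ?_⟩
    ext i; fin_cases i <;> simp
  · exact Submodule.subset_span (by simp)
  · refine Submodule.mem_span_pair.2 ⟨-(3 * b / d), d⁻¹, ?_⟩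
    ext i; fin_cases i <;> simp [hd]
    field_simp; ring

lemma J_tangent {F : Type} [Field F] (t : F) :
    projAct F (tcJ F * tcG t 1 one_ne_zero) (tangentAtInf F) = tangentAt F t := by
  unfold tangentAtInf tangentAt
  rw [projAct_mul, projAct_span2, projAct_span2]
  congr 2
  · ext i
    fin_cases i <;> simp [tcG, tcJ, tcJm, tcM, Matrix.vecMul, dotProduct, Fin.sum_univ_four]
  · congr 1
    ext i
    fin_cases i <;> simp [tcG, tcJ, tcJm, tcM, Matrix.vecMul, dotProduct, Fin.sum_univ_four]

lemma J_P {F : Type} [Field F] (t : F) :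
    projAct F (tcJ F * tcG t 1 one_ne_zero) (Submodule.span F {![1, 0, 0, 0]}) =
      Submodule.span F {![t ^ 3, t ^ 2, t, 1]} := by
  rw [projAct_mul, projAct_span1, projAct_span1]
  congr 2
  ext i
  fin_cases i <;> simp [tcG, tcJ, tcJm, tcM, Matrix.vecMul, dotProduct, Fin.sum_univ_four]

lemma tangent_pt_inf {F : Type} [Field F] (u : Fin 4 → F) (hu : u ∈ cubicVecs F)
    (h : u ∈ tangentAtInf F) : u = ![1, 0, 0, 0] := by
  rcases hu with ⟨t, rfl⟩ | rfl
  · obtain ⟨x, y, e⟩ := Submodule.mem_span_pair.1 h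
    simpa using congrFun e 3
  · rfl

lemma tangentAt_inj {F : Type} [Field F] : Function.Injective (tangentAt F) := by
  intro s t h
  have : ![s ^ 3, s ^ 2, s, 1] ∈ tangentAt F t := by
    rw [← h]; exact Submodule.subset_span (by simp)
  obtain ⟨x, y, e⟩ := Submodule.mem_span_pair.1 this
  have h3 : x = 1 := by simpa using congrFun e 3
  have h2 : t + y = s := by simpa [h3] using congrFun e 2
  have h1 : t ^ 2 + y * (2 * t) = s ^ 2 := by simpa [h3] using congrFun e 1
  have : (s - t) ^ 2 = 0 := by rw [← h2] at h1 ⊢; linear_combination -h1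
  exact sub_eq_zero.1 (pow_eq_zero_iff two_ne_zero |>.1 this)

lemma tangentAt_ne {F : Type} [Field F] (t : F) : tangentAt F t ≠ tangentAtInf F := by
  intro h
  have : ![t ^ 3, t ^ 2, t, 1] ∈ tangentAtInf F := by
    rw [← h]; exact Submodule.subset_span (by simp)
  have := tangent_pt_inf _ (Or.inl ⟨t, rfl⟩) this
  simpa using congrFun this 3

lemma stab_fix {F : Type} [Field F] {A : GL (Fin 4) F} (hA : Pres A)
    (h : projAct F A (tangentAtInf F) = tangentAtInf F) :
    projAct F A (Submodule.span F {![1, 0, 0, 0]}) = Submodule.span F {![1, 0, 0, 0]} := by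
  have hm : projAct F A (Submodule.span F {![1, 0, 0, 0]}) ∈ twistedCubic F := by
    rw [← hA]; exact ⟨_, ⟨_, Or.inr rfl, rfl⟩, rfl⟩
  obtain ⟨u, hu, e⟩ := hm
  have hle : projAct F A (Submodule.span F {![1, 0, 0, 0]}) ≤ tangentAtInf F := by
    rw [← h]
    exact Submodule.map_mono (Submodule.span_mono (by simp))
  have : u ∈ tangentAtInf F := hle (by rw [← e]; exact Submodule.mem_span_singleton_self _)
  rw [← e, tangent_pt_inf u hu this]

lemma stab_eq {F : Type} [Field F] [Fintype F] (hq : 5 ≤ Fintype.card F) :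
    lineStab F (tangentAtInf F) = Set.range (fun p : F × Fˣ => projAct F (tcG p.1 p.2 p.2.ne_zero)) := by
  ext f
  constructor
  · rintro ⟨⟨⟨A, rfl⟩, hA⟩, h⟩
    obtain ⟨b, d, hd, e⟩ := key_fix hq A hA (stab_fix hA h)
    exact ⟨(b, Units.mk0 d hd), e.symm⟩
  · rintro ⟨⟨b, d⟩, rfl⟩
    exact ⟨⟨⟨_, rfl⟩, pres_tcG _ _ _⟩, inf_tangent _ _ _⟩

lemma param_inj {F : Type} [Field F] :
    Function.Injective (fun p : F × Fˣ => projAct F (tcG p.1 p.2 p.2.ne_zero)) := by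
  rintro ⟨b, d⟩ ⟨b', d'⟩ h
  simp only at h
  have h0 := congrFun h (Submodule.span F {![(0 : F) ^ 3, 0 ^ 2, 0, 1]})
  have h1 := congrFun h (Submodule.span F {![(1 : F) ^ 3, 1 ^ 2, 1, 1]})
  rw [act_P, act_P] at h0 h1
  have h0 := span_P_inj _ _ h0
  have h1 := span_P_inj _ _ h1
  have hd := d.ne_zero
  have hd' := d'.ne_zero
  have e : (d : F) = d' := by
    rw [add_div, add_div] at h0 h1
    have : (1 : F) / d = 1 / d' := by linear_combination h1 - h0
    field_simp at this
    exact this.symm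
  have e2 : b = b' := by
    rw [e] at h0
    field_simp at h0
    simpa using h0
  rw [Prod.mk.injEq]
  exact ⟨e2, Units.ext e⟩

lemma stab_conj {F : Type} [Field F] (g : GL (Fin 4) F) (hg : Pres g)
    (ℓ : Submodule F (Fin 4 → F)) :
    (lineStab F (projAct F g ℓ)).ncard = (lineStab F ℓ).ncard := by
  have : lineStab F (projAct F g ℓ) =
      (fun f W => projAct F g (f (projAct F g⁻¹ W))) '' lineStab F ℓ := by
    ext f
    constructor
    · rintro ⟨⟨⟨A, rfl⟩, hA⟩, h⟩
      refine ⟨projAct F (g * A * g⁻¹), ⟨⟨⟨_, rfl⟩, (hg.mul hA).mul hg.inv⟩, ?_⟩, ?_⟩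
      · rw [projAct_mul, projAct_mul, h, projAct_inv]
      · funext W
        simp only [projAct_mul, projAct_inv']
    · rintro ⟨_, ⟨⟨⟨A, rfl⟩, hA⟩, h⟩, rfl⟩
      have e : (fun W => projAct F g (projAct F A (projAct F g⁻¹ W))) =
          projAct F (g⁻¹ * A * g) := by
        funext W; rw [projAct_mul, projAct_mul]
      refine ⟨?_, ?_⟩
      · simp only [e]
        exact ⟨⟨_, rfl⟩, (hg.inv.mul hA).mul hg⟩
      · simp only [projAct_inv, h]
  rw [this, Set.ncard_image_of_injective]
  intro f f' h
  funext W
  have := congrFun h (projAct F g W)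
  simp only [projAct_inv] at this
  exact projAct_inj g this

theorem stmt_3 (q : ℕ) (F : Type) [Field F] [Fintype F]
    (hcard : Fintype.card F = q) (hq : 5 ≤ q) :
    {ℓ : Submodule F (Fin 4 → F) | isTangent F ℓ}.ncard = q + 1 ∧
    {ℓ : Submodule F (Fin 4 → F) | isTangent F ℓ} = lineOrbit F (tangentAtInf F) ∧
    (∀ ℓ : Submodule F (Fin 4 → F), isTangent F ℓ → (lineStab F ℓ).ncard = q * (q - 1)) ∧
    lineStab F (tangentAtInf F) =
      {f | ∃ b d : F, d ≠ 0 ∧ ∃ A : GL (Fin 4) F,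
        (↑A : Matrix (Fin 4) (Fin 4) F) =
          !![1, 0, 0, 0;
             3 * b, d, 0, 0;
             3 * b ^ 2, 2 * b * d, d ^ 2, 0;
             b ^ 3, b ^ 2 * d, b * d ^ 2, d ^ 3] ∧
        f = projAct F A} := by
  subst hcard
  have hT : {ℓ : Submodule F (Fin 4 → F) | isTangent F ℓ} =
      insert (tangentAtInf F) (Set.range (tangentAt F)) := by
    ext ℓ
    simp only [isTangent, Set.mem_setOf_eq, Set.mem_insert_iff, Set.mem_range]
    constructor
    · rintro (⟨t, rfl⟩ | h)
      · exact Or.inr ⟨t, rfl⟩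
      · exact Or.inl h
    · rintro (h | ⟨t, rfl⟩)
      · exact Or.inr h
      · exact Or.inl ⟨t, rfl⟩
  have hinf : (lineStab F (tangentAtInf F)).ncard = Fintype.card F * (Fintype.card F - 1) := by
    classical
    rw [stab_eq hq, ← Set.image_univ, Set.ncard_image_of_injective _ param_inj, Set.ncard_univ,
      Nat.card_prod, Nat.card_eq_fintype_card, Nat.card_eq_fintype_card, Fintype.card_units]
  refine ⟨?_, ?_, ?_, ?_⟩
  · rw [hT, Set.ncard_insert_of_notMem, ← Set.image_univ,
      Set.ncard_image_of_injective _ tangentAt_inj, Set.ncard_univ, Nat.card_eq_fintype_card]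
    rintro ⟨t, ht⟩
    exact tangentAt_ne t ht
  · ext ℓ
    constructor
    · rintro (⟨t, rfl⟩ | rfl)
      · exact ⟨_, ⟨⟨_, rfl⟩, pres_tcJ.mul (pres_tcG t 1 one_ne_zero)⟩, J_tangent t⟩
      · exact ⟨_, ⟨⟨_, rfl⟩, pres_tcG 0 1 one_ne_zero⟩, inf_tangent _ _ _⟩
    · rintro ⟨_, ⟨⟨A, rfl⟩, hA⟩, rfl⟩
      have hm : projAct F A (Submodule.span F {![1, 0, 0, 0]}) ∈ twistedCubic F := by
        rw [← hA]; exact ⟨_, ⟨_, Or.inr rfl, rfl⟩, rfl⟩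
      obtain ⟨u, ⟨s, rfl⟩ | rfl, e⟩ := hm
      · left
        refine ⟨s, ?_⟩
        set g := tcJ F * tcG s 1 one_ne_zero with hgdef
        have hg : Pres g := pres_tcJ.mul (pres_tcG s 1 one_ne_zero)
        obtain ⟨b, d, hd, E⟩ := key_fix hq (A * g⁻¹) (Pres.mul hA hg.inv)
          (by rw [projAct_mul, ← e]
              simp only
              rw [← J_P, projAct_inv])
        have h := congrFun E (tangentAtInf F)
        rw [inf_tangent, projAct_mul] at h
        have h := congrArg (projAct F g) h
        rwa [projAct_inv', J_tangent] at h
      · right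
        obtain ⟨b, d, hd, E⟩ := key_fix hq A hA e.symm
        rw [E, inf_tangent]
  · rintro ℓ (⟨t, rfl⟩ | rfl)
    · rw [← J_tangent, stab_conj _ (pres_tcJ.mul (pres_tcG t 1 one_ne_zero)), hinf]
    · exact hinf
  · rw [stab_eq hq]
    ext f
    constructor
    · rintro ⟨⟨b, d⟩, rfl⟩
      exact ⟨b, d, d.ne_zero, _, rfl, rfl⟩
    · rintro ⟨b, d, hd, A, hA, rfl⟩
      refine ⟨(b, Units.mk0 d hd), ?_⟩
      have e : tcG b d hd = A := Units.ext (by rw [hA]; rfl)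
      rw [← e]
      rfl
end

section
/- Let q ≢ 0 (mod 3) be a prime power with q ≥ 5. The real axes of the osculating developable Γ of the twisted cubic C form a single orbit of lines under G_q, and the stabilizer in G_q of any real axis has order 2(q−1). Moreover, the line ℓ through (0:0:1:0) and (0:1:0:0) is a real axis, and the stabilizer in G_q of ℓ consists exactly of the projectivities induced by the diagonal matrices diag(1, d, d², d³) with d ∈ F_q^*, together with the antidiagonal matrices with rows (0,0,0,1), (0,0,b,0), (0,b²,0,0), (b³,0,0,0) with b ∈ F_q^*. -/
open Matrix Submodule

namespace TC
variable {F : Type} [Field F]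

def cub (s u : F) : Fin 4 → F := ![s ^ 3, s ^ 2 * u, s * u ^ 2, u ^ 3]

def S (a b c d : F) : Matrix (Fin 4) (Fin 4) F :=
  !![a ^ 3, a ^ 2 * c, a * c ^ 2, c ^ 3;
     3 * a ^ 2 * b, a ^ 2 * d + 2 * a * b * c, 2 * a * c * d + b * c ^ 2, 3 * c ^ 2 * d;
     3 * a * b ^ 2, 2 * a * b * d + b ^ 2 * c, a * d ^ 2 + 2 * b * c * d, 3 * c * d ^ 2;
     b ^ 3, b ^ 2 * d, b * d ^ 2, d ^ 3]

lemma cub_S (a b c d s u : F) :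
    Matrix.vecMul (cub s u) (S a b c d) = cub (a * s + b * u) (c * s + d * u) := by
  ext i
  fin_cases i <;> simp [cub, S, Matrix.vecMul, dotProduct, Fin.sum_univ_four] <;> ring

lemma S_mul (a b c d a' b' c' d' : F) :
    S a b c d * S a' b' c' d' =
      S (a' * a + b' * c) (a' * b + b' * d) (c' * a + d' * c) (c' * b + d' * d) := by
  ext i j
  fin_cases i <;> fin_cases j <;> simp [S, Matrix.mul_apply, Fin.sum_univ_four] <;> ring

lemma S_scalar (a : F) : S a 0 0 a = (a ^ 3) • (1 : Matrix (Fin 4) (Fin 4) F) := by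
  ext i j
  fin_cases i <;> fin_cases j <;> simp [S] <;> ring

lemma S_adj (a b c d : F) :
    S a b c d * S d (-b) (-c) a = ((a * d - b * c) ^ 3) • (1 : Matrix (Fin 4) (Fin 4) F) := by
  rw [S_mul, ← S_scalar]; congr 1 <;> ring

lemma S_adj' (a b c d : F) :
    S d (-b) (-c) a * S a b c d = ((a * d - b * c) ^ 3) • (1 : Matrix (Fin 4) (Fin 4) F) := by
  rw [S_mul, ← S_scalar]; congr 1 <;> ring

def SG (a b c d : F) (h : a * d - b * c ≠ 0) : GL (Fin 4) F where
  val := S a b c d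
  inv := ((a * d - b * c) ^ 3)⁻¹ • S d (-b) (-c) a
  val_inv := by
    rw [Matrix.mul_smul, S_adj, smul_smul, inv_mul_cancel₀ (pow_ne_zero _ h), one_smul]
  inv_val := by
    rw [Matrix.smul_mul, S_adj', smul_smul, inv_mul_cancel₀ (pow_ne_zero _ h), one_smul]

lemma SG_coe (a b c d : F) (h : a * d - b * c ≠ 0) :
    ((SG a b c d h : GL (Fin 4) F) : Matrix (Fin 4) (Fin 4) F) = S a b c d := rfl

/-! projAct basics -/

lemma projAct_mul (A B : GL (Fin 4) F) (W : Submodule F (Fin 4 → F)) :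
    projAct F (A * B) W = projAct F B (projAct F A W) := by
  unfold projAct
  rw [← Submodule.map_comp]
  congr 1
  refine LinearMap.ext fun v => ?_
  exact (Matrix.vecMul_vecMul v (A : Matrix (Fin 4) (Fin 4) F) (B : Matrix (Fin 4) (Fin 4) F)).symm

lemma projAct_one (W : Submodule F (Fin 4 → F)) : projAct F 1 W = W := by
  unfold projAct
  convert Submodule.map_id W
  ext v
  simp

lemma projAct_inv (A : GL (Fin 4) F) (W : Submodule F (Fin 4 → F)) :
    projAct F A⁻¹ (projAct F A W) = W := by
  rw [← projAct_mul, mul_inv_cancel, projAct_one]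

lemma projAct_inv' (A : GL (Fin 4) F) (W : Submodule F (Fin 4 → F)) :
    projAct F A (projAct F A⁻¹ W) = W := by
  rw [← projAct_mul, inv_mul_cancel, projAct_one]

lemma projAct_inj (A : GL (Fin 4) F) : Function.Injective (projAct F A) :=
  Function.LeftInverse.injective (projAct_inv A)

lemma projAct_span (A : GL (Fin 4) F) (v : Fin 4 → F) :
    projAct F A (Submodule.span F {v}) =
      Submodule.span F {Matrix.vecMul v (A : Matrix (Fin 4) (Fin 4) F)} := by
  unfold projAct
  rw [Submodule.map_span, Set.image_singleton]; rfl

lemma mem_projAct (A : GL (Fin 4) F) (W : Submodule F (Fin 4 → F)) (v : Fin 4 → F) :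
    Matrix.vecMul v (A : Matrix (Fin 4) (Fin 4) F) ∈ projAct F A W ↔ v ∈ W := by
  unfold projAct
  constructor
  · rintro ⟨w, hw, h⟩
    have : w = v := by
      have h2 : Matrix.vecMul w (A : Matrix (Fin 4) (Fin 4) F) = Matrix.vecMul v A := h
      have h3 := congrArg (fun x => Matrix.vecMul x ((A⁻¹ : GL (Fin 4) F) : Matrix (Fin 4) (Fin 4) F)) h2
      simpa only [Matrix.vecMul_vecMul, ← Units.val_mul, mul_inv_cancel, Units.val_one,
        Matrix.vecMul_one] using h3
    rwa [← this]
  · intro h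
    exact ⟨v, h, rfl⟩

lemma vecMul_surj (A : GL (Fin 4) F) (w : Fin 4 → F) :
    ∃ v, Matrix.vecMul v (A : Matrix (Fin 4) (Fin 4) F) = w :=
  ⟨Matrix.vecMul w ((A⁻¹ : GL (Fin 4) F) : Matrix (Fin 4) (Fin 4) F), by
    rw [Matrix.vecMul_vecMul, ← Units.val_mul, inv_mul_cancel, Units.val_one, Matrix.vecMul_one]⟩

lemma projAct_ext (A : GL (Fin 4) F) (W W' : Submodule F (Fin 4 → F))
    (h : ∀ v, v ∈ W ↔ Matrix.vecMul v (A : Matrix (Fin 4) (Fin 4) F) ∈ W') :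
    projAct F A W = W' := by
  ext w
  obtain ⟨v, rfl⟩ := vecMul_surj A w
  rw [mem_projAct, h]

lemma projAct_inf (A : GL (Fin 4) F) (W W' : Submodule F (Fin 4 → F)) :
    projAct F A (W ⊓ W') = projAct F A W ⊓ projAct F A W' := by
  apply projAct_ext
  intro v
  rw [Submodule.mem_inf, Submodule.mem_inf, mem_projAct, mem_projAct]

lemma projAct_smul (A B : GL (Fin 4) F) (k : F) (hk : k ≠ 0)
    (h : (A : Matrix (Fin 4) (Fin 4) F) = k • (B : Matrix (Fin 4) (Fin 4) F)) :
    projAct F A = projAct F B := by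
  funext W
  apply projAct_ext
  intro v
  rw [h, Matrix.vecMul_smul]
  have h1 : Matrix.vecMul v (B : Matrix (Fin 4) (Fin 4) F) ∈ projAct F B W ↔ v ∈ W :=
    mem_projAct B W v
  rw [← h1]
  exact (Submodule.smul_mem_iff _ hk).symm

lemma projAct_spec {A B : GL (Fin 4) F} (h : projAct F A = projAct F B) (v : Fin 4 → F) :
    ∃ k : F, k • Matrix.vecMul v (B : Matrix (Fin 4) (Fin 4) F) =
      Matrix.vecMul v (A : Matrix (Fin 4) (Fin 4) F) := by
  have := congrFun h (Submodule.span F {v})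
  rw [projAct_span, projAct_span] at this
  rw [← Submodule.mem_span_singleton, ← this]
  exact Submodule.mem_span_singleton_self _

/-! the cubic -/

lemma span_smul (k : F) (hk : k ≠ 0) (v : Fin 4 → F) :
    Submodule.span F {k • v} = Submodule.span F {v} :=
  Submodule.span_singleton_smul_eq (IsUnit.mk0 k hk) v

lemma cub_mem (s u : F) (h : ¬ (s = 0 ∧ u = 0)) :
    Submodule.span F {cub s u} ∈ twistedCubic F := by
  by_cases hu : u = 0
  · have hs : s ≠ 0 := fun hs => h ⟨hs, hu⟩
    refine ⟨![1, 0, 0, 0], Or.inr rfl, ?_⟩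
    have : cub s u = s ^ 3 • ![1, 0, 0, 0] := by
      ext i; fin_cases i <;> simp [cub, hu]
    simp only
    rw [this, span_smul _ (pow_ne_zero _ hs)]
  · refine ⟨![(s / u) ^ 3, (s / u) ^ 2, s / u, 1], Or.inl ⟨_, rfl⟩, ?_⟩
    have : cub s u = u ^ 3 • ![(s / u) ^ 3, (s / u) ^ 2, s / u, 1] := by
      ext i; fin_cases i <;> simp [cub] <;> field_simp
    simp only
    rw [this, span_smul _ (pow_ne_zero _ hu)]

lemma mem_cub (P : Submodule F (Fin 4 → F)) (hP : P ∈ twistedCubic F) :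
    ∃ s u : F, ¬ (s = 0 ∧ u = 0) ∧ P = Submodule.span F {cub s u} := by
  obtain ⟨v, ⟨t, rfl⟩ | rfl, rfl⟩ := hP
  · exact ⟨t, 1, by simp, by simp [cub]⟩
  · exact ⟨1, 0, by simp, by simp [cub]⟩

lemma span_cub (v : Fin 4 → F) (hv : Submodule.span F {v} ∈ twistedCubic F) :
    ∃ k s u : F, ¬ (s = 0 ∧ u = 0) ∧ v = k • cub s u := by
  obtain ⟨s, u, h, e⟩ := mem_cub _ hv
  have : v ∈ Submodule.span F {cub s u} := e ▸ Submodule.mem_span_singleton_self _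
  obtain ⟨k, hk⟩ := Submodule.mem_span_singleton.1 this
  exact ⟨k, s, u, h, hk.symm⟩

lemma rel_cub (v : Fin 4 → F) (hv : Submodule.span F {v} ∈ twistedCubic F) :
    v 0 * v 2 = v 1 ^ 2 ∧ v 1 * v 3 = v 2 ^ 2 := by
  obtain ⟨k, s, u, -, rfl⟩ := span_cub v hv
  constructor <;> simp [cub] <;> ring

lemma M_ne {a b c d s u : F} (h : a * d - b * c ≠ 0) (hs : ¬ (s = 0 ∧ u = 0)) :
    ¬ (a * s + b * u = 0 ∧ c * s + d * u = 0) := by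
  rintro ⟨h1, h2⟩
  apply hs
  constructor
  · apply (mul_eq_zero.1 (_ : (a * d - b * c) * s = 0)).resolve_left h
    linear_combination d * h1 - b * h2
  · apply (mul_eq_zero.1 (_ : (a * d - b * c) * u = 0)).resolve_left h
    linear_combination a * h2 - c * h1

lemma SG_maps (a b c d : F) (h : a * d - b * c ≠ 0) (P : Submodule F (Fin 4 → F))
    (hP : P ∈ twistedCubic F) : projAct F (SG a b c d h) P ∈ twistedCubic F := by
  obtain ⟨s, u, hs, rfl⟩ := mem_cub P hP
  rw [projAct_span, SG_coe, cub_S]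
  exact cub_mem _ _ (M_ne h hs)

lemma SG_inv (a b c d : F) (h : a * d - b * c ≠ 0) (h' : d * a - (-b) * (-c) ≠ 0) :
    projAct F (SG a b c d h)⁻¹ = projAct F (SG d (-b) (-c) a h') :=
  projAct_smul _ _ ((a * d - b * c) ^ 3)⁻¹ (inv_ne_zero (pow_ne_zero _ h)) rfl

lemma SG_Gq (a b c d : F) (h : a * d - b * c ≠ 0) : projAct F (SG a b c d h) ∈ Gq F := by
  refine ⟨⟨_, rfl⟩, ?_⟩
  apply Set.Subset.antisymm
  · rintro _ ⟨P, hP, rfl⟩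
    exact SG_maps _ _ _ _ _ _ hP
  · intro P hP
    have h' : d * a - (-b) * (-c) ≠ 0 := by
      intro e; apply h; linear_combination e
    refine ⟨projAct F (SG a b c d h)⁻¹ P, ?_, projAct_inv' _ _⟩
    rw [SG_inv a b c d h h']
    exact SG_maps _ _ _ _ _ _ hP

lemma quartic [Fintype F] (hq : 5 ≤ Fintype.card F) (a b c d e : F)
    (h : ∀ t : F, a * t ^ 4 + b * t ^ 3 + c * t ^ 2 + d * t + e = 0) :
    a = 0 ∧ b = 0 ∧ c = 0 ∧ d = 0 ∧ e = 0 := by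
  classical
  let p : Polynomial F := Polynomial.C a * Polynomial.X ^ 4 + Polynomial.C b * Polynomial.X ^ 3
    + Polynomial.C c * Polynomial.X ^ 2 + Polynomial.C d * Polynomial.X + Polynomial.C e
  have hp : p = 0 := by
    apply Polynomial.eq_zero_of_natDegree_lt_card_of_eval_eq_zero' p Finset.univ
    · intro t _
      simp [p, h]
    · rw [Finset.card_univ]
      refine lt_of_le_of_lt ?_ (show 4 < Fintype.card F by omega)
      simp only [p]
      compute_degree
  have hc : ∀ n, p.coeff n = 0 := by simp [hp]
  have h0 := hc 0
  have h1 := hc 1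
  have h2 := hc 2
  have h3 := hc 3
  have h4 := hc 4
  simp [p, Polynomial.coeff_X, Polynomial.coeff_C, Polynomial.coeff_X_pow] at h0 h1 h2 h3 h4
  exact ⟨h4, h3, h2, h1, h0⟩

lemma diag_of [Fintype F] (hq : 5 ≤ Fintype.card F) (A : Matrix (Fin 4) (Fin 4) F)
    (hdet : A.det ≠ 0) (h01 : A 0 1 = 0) (h02 : A 0 2 = 0) (h03 : A 0 3 = 0)
    (h30 : A 3 0 = 0) (h31 : A 3 1 = 0) (h32 : A 3 2 = 0)
    (h : ∀ t : F, Submodule.span F {Matrix.vecMul (cub t 1) A} ∈ twistedCubic F) :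
    ∃ k d : F, k ≠ 0 ∧ d ≠ 0 ∧ A = k • S 1 0 0 d := by
  have ha : A 0 0 ≠ 0 := by
    intro e
    apply hdet
    apply Matrix.det_eq_zero_of_row_eq_zero 0
    intro j; fin_cases j <;> assumption
  have hc : A 3 3 ≠ 0 := by
    intro e
    apply hdet
    apply Matrix.det_eq_zero_of_row_eq_zero 3
    intro j; fin_cases j <;> assumption
  have r : ∀ t : F, (A 0 0 * t ^ 3 + A 1 0 * t ^ 2 + A 2 0 * t) * (A 1 2 * t ^ 2 + A 2 2 * t)
      = (A 1 1 * t ^ 2 + A 2 1 * t) ^ 2 ∧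
      (A 1 1 * t ^ 2 + A 2 1 * t) * (A 1 3 * t ^ 2 + A 2 3 * t + A 3 3)
      = (A 1 2 * t ^ 2 + A 2 2 * t) ^ 2 := by
    intro t
    have := rel_cub _ (h t)
    simp [cub, Matrix.vecMul, dotProduct, Fin.sum_univ_four, h01, h02, h03, h30, h31, h32] at this
    constructor
    · linear_combination this.1
    · linear_combination this.2
  obtain ⟨e1, e2, e3, e4, -⟩ := quartic hq (A 0 0 * A 1 2)
      (A 0 0 * A 2 2 + A 1 0 * A 1 2 - A 1 1 ^ 2)
      (A 1 0 * A 2 2 + A 2 0 * A 1 2 - 2 * A 1 1 * A 2 1) (A 2 0 * A 2 2 - A 2 1 ^ 2) 0 (by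
    intro t
    by_cases ht : t = 0
    · simp [ht]
    · apply (mul_eq_zero.1 (_ : t * _ = 0)).resolve_left ht
      linear_combination (r t).1)
  obtain ⟨f1, f2, f3, f4, -⟩ := quartic hq (A 1 1 * A 1 3 - A 1 2 ^ 2)
      (A 1 1 * A 2 3 + A 2 1 * A 1 3 - 2 * A 1 2 * A 2 2)
      (A 1 1 * A 3 3 + A 2 1 * A 2 3 - A 2 2 ^ 2) (A 2 1 * A 3 3) 0 (by
    intro t
    linear_combination (r t).2)
  have h12 : A 1 2 = 0 := (mul_eq_zero.1 e1).resolve_left ha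
  have h21 : A 2 1 = 0 := (mul_eq_zero.1 f4).resolve_right hc
  simp only [h12, h21] at e2 e3 e4 f1 f2 f3
  have h11 : A 1 1 ≠ 0 := by
    intro e
    apply hdet
    apply Matrix.det_eq_zero_of_column_eq_zero 1
    intro j; fin_cases j <;> assumption
  have h22 : A 2 2 ≠ 0 := by
    intro e
    apply hdet
    apply Matrix.det_eq_zero_of_column_eq_zero 2
    intro j; fin_cases j <;> assumption
  simp [h11, h22] at e2 e3 e4 f1 f2 f3
  refine ⟨A 0 0, A 1 1 / A 0 0, ha, div_ne_zero h11 ha, ?_⟩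
  have g2 : A 2 2 = A 1 1 ^ 2 / A 0 0 := by
    field_simp; linear_combination e2
  have g3 : A 3 3 = A 1 1 ^ 3 / A 0 0 ^ 2 := by
    have : A 3 3 = A 2 2 ^ 2 / A 1 1 := by
      field_simp; linear_combination f3
    rw [this, g2]; field_simp
  ext i j
  fin_cases i <;> fin_cases j <;> simp [S, *] <;> field_simp

lemma Gq_SG [Fintype F] (hq : 5 ≤ Fintype.card F)
    (f : Submodule F (Fin 4 → F) → Submodule F (Fin 4 → F)) (hf : f ∈ Gq F) :
    ∃ (a b c d : F) (h : a * d - b * c ≠ 0), f = projAct F (SG a b c d h) := by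
  obtain ⟨⟨A, rfl⟩, hA⟩ := hf
  have hA' : ∀ P ∈ twistedCubic F, projAct F A P ∈ twistedCubic F := fun P hP =>
    hA ▸ Set.mem_image_of_mem _ hP
  obtain ⟨a, c, h1, e1⟩ := mem_cub _ (hA' _ (cub_mem 1 0 (by simp)))
  obtain ⟨b, d, h2, e2⟩ := mem_cub _ (hA' _ (cub_mem 0 1 (by simp)))
  have h : a * d - b * c ≠ 0 := by
    intro h
    have : ∃ k : F, k ≠ 0 ∧ a = k * b ∧ c = k * d := by
      by_cases hb : b = 0
      · have hd : d ≠ 0 := fun hd => h2 ⟨hb, hd⟩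
        have ha : a = 0 := by simpa [hb, hd] using h
        have hc : c ≠ 0 := fun hc => h1 ⟨ha, hc⟩
        exact ⟨c / d, div_ne_zero hc hd, by simp [ha, hb], by field_simp⟩
      · have ha : a ≠ 0 := by
          intro ha
          apply h1
          refine ⟨ha, ?_⟩
          simpa [ha, hb] using h
        refine ⟨a / b, div_ne_zero ha hb, by field_simp, ?_⟩
        field_simp; linear_combination -h
    obtain ⟨k, hk, rfl, rfl⟩ := this
    have e3 : cub (k * b) (k * d) = k ^ 3 • cub b d := by
      ext i; fin_cases i <;> simp [cub] <;> ring
    rw [e3, span_smul _ (pow_ne_zero _ hk), ← e2] at e1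
    have e4 := projAct_inj A e1
    have : cub (1 : F) 0 ∈ Submodule.span F {cub (0 : F) 1} := by
      rw [← e4]; exact Submodule.mem_span_singleton_self _
    obtain ⟨x, hx⟩ := Submodule.mem_span_singleton.1 this
    have := congrFun hx 0
    simp [cub] at this
  let D := SG a b c d h
  let B := A * D⁻¹
  have h' : d * a - (-b) * (-c) ≠ 0 := by
    intro e; apply h; linear_combination e
  have hB : ∀ P ∈ twistedCubic F, projAct F B P ∈ twistedCubic F := by
    intro P hP
    rw [projAct_mul, SG_inv a b c d h h']
    exact SG_maps _ _ _ _ _ _ (hA' P hP)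
  have b1 : projAct F B (Submodule.span F {cub 1 0}) = Submodule.span F {cub 1 0} := by
    rw [projAct_mul, e1]
    apply projAct_inj D
    rw [projAct_inv', projAct_span, SG_coe, cub_S]; simp
  have b2 : projAct F B (Submodule.span F {cub 0 1}) = Submodule.span F {cub 0 1} := by
    rw [projAct_mul, e2]
    apply projAct_inj D
    rw [projAct_inv', projAct_span, SG_coe, cub_S]; simp
  rw [projAct_span] at b1 b2
  have b3 := b1 ▸ Submodule.mem_span_singleton_self
    (Matrix.vecMul (cub 1 0) (B : Matrix (Fin 4) (Fin 4) F))
  have b4 := b2 ▸ Submodule.mem_span_singleton_self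
    (Matrix.vecMul (cub 0 1) (B : Matrix (Fin 4) (Fin 4) F))
  obtain ⟨x, hx⟩ := Submodule.mem_span_singleton.1 b3
  obtain ⟨y, hy⟩ := Submodule.mem_span_singleton.1 b4
  have hx1 := congrFun hx 1
  have hx2 := congrFun hx 2
  have hx3 := congrFun hx 3
  have hy0 := congrFun hy 0
  have hy1 := congrFun hy 1
  have hy2 := congrFun hy 2
  simp only [cub, Matrix.vecMul, dotProduct, Fin.sum_univ_four] at hx1 hx2 hx3 hy0 hy1 hy2
  simp at hx1 hx2 hx3 hy0 hy1 hy2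
  obtain ⟨k, e, hk, he, hBe⟩ := diag_of hq (B : Matrix (Fin 4) (Fin 4) F)
    ((Matrix.isUnit_iff_isUnit_det _).1 B.isUnit).ne_zero hx1.symm hx2.symm hx3.symm
    hy0.symm hy1.symm hy2.symm (by
      intro t
      rw [← projAct_span]
      exact hB _ (cub_mem _ _ (by simp)))
  refine ⟨a * 1 + b * 0, a * 0 + b * e, c * 1 + d * 0, c * 0 + d * e, ?_, ?_⟩
  · intro h0
    apply mul_ne_zero h he
    linear_combination h0
  · apply projAct_smul _ _ k hk
    rw [SG_coe, ← S_mul, ← Matrix.smul_mul, ← hBe]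
    have : A = B * D := by simp [B]
    rw [this]; rfl

/-! osculating planes -/

def om (s u : F) : Submodule F (Fin 4 → F) :=
  planeOf F ![u ^ 3, -(3 * s * u ^ 2), 3 * s ^ 2 * u, -s ^ 3]

lemma mem_om (s u : F) (v : Fin 4 → F) : v ∈ om s u ↔
    u ^ 3 * v 0 - 3 * s * u ^ 2 * v 1 + 3 * s ^ 2 * u * v 2 - s ^ 3 * v 3 = 0 := by
  simp only [om, planeOf, LinearMap.mem_ker, planeForm, LinearMap.coe_mk, AddHom.coe_mk]
  simp [sub_eq_add_neg]

lemma om_smul (k s u : F) (hk : k ≠ 0) : om (k * s) (k * u) = om s u := by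
  ext v
  rw [mem_om, mem_om]
  rw [← mul_eq_zero_iff_left (pow_ne_zero 3 hk) (b := u ^ 3 * v 0 - _ + _ - _)]
  constructor <;> intro h <;> linear_combination h

lemma om_osc (s u : F) (h : ¬ (s = 0 ∧ u = 0)) : isOscPlane F (om s u) := by
  by_cases hu : u = 0
  · right
    have hs : s ≠ 0 := fun hs => h ⟨hs, hu⟩
    ext v
    rw [mem_om]
    simp [oscPlaneInf, planeOf, planeForm, hu, hs]
  · left
    refine ⟨s / u, ?_⟩
    have : om s u = om (s / u) 1 := by
      rw [← om_smul u (s / u) 1 hu]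
      congr 1 <;> field_simp
    rw [this]
    simp [om, oscPlane]

lemma osc_om (π : Submodule F (Fin 4 → F)) (h : isOscPlane F π) :
    ∃ s u : F, ¬ (s = 0 ∧ u = 0) ∧ π = om s u := by
  obtain ⟨t, rfl⟩ | rfl := h
  · exact ⟨t, 1, by simp, by simp [om, oscPlane]⟩
  · refine ⟨1, 0, by simp, ?_⟩
    ext v
    rw [mem_om]
    simp [oscPlaneInf, planeOf, planeForm]

lemma om_S (a b c d : F) (h : a * d - b * c ≠ 0) (s u : F) :
    projAct F (SG a b c d h) (om s u) = om (a * s + b * u) (c * s + d * u) := by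
  apply projAct_ext
  intro v
  rw [mem_om, mem_om, SG_coe]
  rw [← mul_eq_zero_iff_left (pow_ne_zero 3 h)]
  have : ∀ x y : F, x = y → (x = 0 ↔ y = 0) := fun x y h => by rw [h]
  apply this
  simp [S, Matrix.vecMul, dotProduct, Fin.sum_univ_four]
  ring

def ell (F : Type) [Field F] : Submodule F (Fin 4 → F) :=
  Submodule.span F ({![0, 0, 1, 0], ![0, 1, 0, 0]} : Set (Fin 4 → F))

lemma mem_ell (v : Fin 4 → F) : v ∈ ell F ↔ v 0 = 0 ∧ v 3 = 0 := by
  rw [ell, Submodule.mem_span_pair]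
  constructor
  · rintro ⟨a, b, rfl⟩
    simp
  · rintro ⟨h0, h3⟩
    refine ⟨v 2, v 1, ?_⟩
    ext i; fin_cases i <;> simp [h0, h3]

lemma ell_om : ell F = om 0 1 ⊓ om 1 0 := by
  ext v
  rw [Submodule.mem_inf, mem_ell, mem_om, mem_om]
  simp

lemma om_ne : om (0 : F) 1 ≠ om 1 0 := by
  intro h
  have : (![0, 0, 0, 1] : Fin 4 → F) ∈ om (1 : F) 0 := by
    rw [← h, mem_om]; simp
  rw [mem_om] at this
  simp at this

lemma ell_axis : isRealAxis F (ell F) :=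
  ⟨_, _, om_osc 0 1 (by simp), om_osc 1 0 (by simp), om_ne, ell_om⟩

lemma axis_iff [Fintype F] (hq : 5 ≤ Fintype.card F) (m : Submodule F (Fin 4 → F)) :
    isRealAxis F m ↔ m ∈ lineOrbit F (ell F) := by
  constructor
  · rintro ⟨_, _, h1, h2, hne, rfl⟩
    obtain ⟨b, d, hbd, rfl⟩ := osc_om _ h1
    obtain ⟨a, c, hac, rfl⟩ := osc_om _ h2
    have h : a * d - b * c ≠ 0 := by
      intro h
      apply hne
      by_cases hb : b = 0
      · have hd : d ≠ 0 := fun hd => hbd ⟨hb, hd⟩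
        have ha : a = 0 := by simpa [hb, hd] using h
        have hc : c ≠ 0 := fun hc => hac ⟨ha, hc⟩
        rw [← om_smul c b d hc, ← om_smul d a c hd, ha, hb, mul_comm c d]; simp
      · have ha : a ≠ 0 := by
          intro ha
          apply hac
          refine ⟨ha, ?_⟩
          simpa [ha, hb] using h
        rw [← om_smul a b d ha, ← om_smul b a c hb, mul_comm a b, sub_eq_zero.1 h]
    refine ⟨_, SG_Gq a b c d h, ?_⟩
    rw [ell_om, projAct_inf, om_S, om_S]
    simp
  · rintro ⟨f, hf, rfl⟩
    obtain ⟨a, b, c, d, h, rfl⟩ := Gq_SG hq f hf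
    refine ⟨projAct F (SG a b c d h) (om 0 1), projAct F (SG a b c d h) (om 1 0), ?_, ?_,
      fun e => om_ne (projAct_inj _ e), ?_⟩
    · rw [om_S]; exact om_osc _ _ (M_ne h (by simp))
    · rw [om_S]; exact om_osc _ _ (M_ne h (by simp))
    · rw [ell_om, projAct_inf]

/-! stabilizer -/

lemma diag_eq (d : F) :
    !![1, 0, 0, 0; 0, d, 0, 0; 0, 0, d ^ 2, 0; 0, 0, 0, d ^ 3] = S 1 0 0 d := by
  ext i j
  fin_cases i <;> fin_cases j <;> simp [S]

lemma anti_eq (b : F) :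
    !![0, 0, 0, 1; 0, 0, b, 0; 0, b ^ 2, 0, 0; b ^ 3, 0, 0, 0] = S 0 b 1 0 := by
  ext i j
  fin_cases i <;> fin_cases j <;> simp [S]

def dg (d : Fˣ) : Submodule F (Fin 4 → F) → Submodule F (Fin 4 → F) :=
  projAct F (SG 1 0 0 d (by simp))

def ag (b : Fˣ) : Submodule F (Fin 4 → F) → Submodule F (Fin 4 → F) :=
  projAct F (SG 0 b 1 0 (by simp))

lemma stab_ell [Fintype F] (hq : 5 ≤ Fintype.card F) (h3 : (3 : F) ≠ 0) :
    lineStab F (ell F) = Set.range dg ∪ Set.range ag := by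
  ext f
  constructor
  · rintro ⟨hf, hl⟩
    obtain ⟨a, b, c, d, h, rfl⟩ := Gq_SG hq f hf
    have h1 := (mem_projAct (SG a b c d h) (ell F) ![0, 1, 0, 0]).2 (by rw [mem_ell]; simp)
    rw [hl, mem_ell, SG_coe] at h1
    simp [S, Matrix.vecMul, dotProduct, Fin.sum_univ_four, h3] at h1
    obtain ⟨hab, hcd⟩ := h1
    rcases hab with rfl | rfl
    · have hc : c ≠ 0 := by rintro rfl; simp at h
      have hb : b ≠ 0 := by rintro rfl; simp at h
      have hd : d = 0 := hcd.resolve_left hc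
      subst hd
      right
      refine ⟨Units.mk0 (b / c) (div_ne_zero hb hc), ?_⟩
      symm
      apply projAct_smul _ _ (c ^ 3) (pow_ne_zero _ hc)
      rw [SG_coe, SG_coe]
      ext i j
      fin_cases i <;> fin_cases j <;> simp [S] <;> field_simp
    · have ha : a ≠ 0 := by rintro rfl; simp at h
      have hd : d ≠ 0 := by rintro rfl; simp at h
      have hc : c = 0 := hcd.resolve_right hd
      subst hc
      left
      refine ⟨Units.mk0 (d / a) (div_ne_zero hd ha), ?_⟩
      symm
      apply projAct_smul _ _ (a ^ 3) (pow_ne_zero _ ha)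
      rw [SG_coe, SG_coe]
      ext i j
      fin_cases i <;> fin_cases j <;> simp [S] <;> field_simp
  · rintro (⟨d, rfl⟩ | ⟨b, rfl⟩)
    · refine ⟨SG_Gq _ _ _ _ _, ?_⟩
      rw [dg, ell_om, projAct_inf, om_S, om_S]
      simp only [mul_zero, mul_one, zero_add, add_zero]
      congr 1
      simpa using om_smul (d : F) 0 1 d.ne_zero
    · refine ⟨SG_Gq _ _ _ _ _, ?_⟩
      rw [ag, ell_om, projAct_inf, om_S, om_S]
      simp only [mul_zero, mul_one, zero_add, add_zero]
      rw [inf_comm]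
      congr 1
      simpa using om_smul (b : F) 1 0 b.ne_zero

lemma dg_inj : Function.Injective (dg (F := F)) := by
  intro d d' h
  obtain ⟨k, hk⟩ := projAct_spec h (cub 1 1)
  rw [SG_coe, SG_coe, cub_S, cub_S] at hk
  have h0 := congrFun hk 0
  have h1 := congrFun hk 1
  simp [cub] at h0 h1
  ext
  rw [h0, one_mul] at h1
  exact h1.symm

lemma ag_inj : Function.Injective (ag (F := F)) := by
  intro d d' h
  obtain ⟨k, hk⟩ := projAct_spec h (cub 1 1)
  rw [SG_coe, SG_coe, cub_S, cub_S] at hk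
  have h0 := congrFun hk 3
  have h1 := congrFun hk 2
  simp [cub] at h0 h1
  ext
  rw [h0, one_mul] at h1
  exact h1.symm

lemma dg_ne_ag (d b : Fˣ) : dg d ≠ ag b := by
  intro h
  obtain ⟨k, hk⟩ := projAct_spec h (cub 1 0)
  rw [SG_coe, SG_coe, cub_S, cub_S] at hk
  have h0 := congrFun hk 0
  simp [cub] at h0

lemma stab_card [Fintype F] (hq : 5 ≤ Fintype.card F) (h3 : (3 : F) ≠ 0) :
    (lineStab F (ell F)).ncard = 2 * (Fintype.card F - 1) := by
  classical
  have hu : Nat.card Fˣ = Fintype.card F - 1 := by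
    rw [Nat.card_eq_fintype_card, Fintype.card_units]
  rw [stab_ell hq h3, Set.ncard_union_eq ?_ (Set.finite_range _) (Set.finite_range _),
    ← Set.image_univ, ← Set.image_univ, Set.ncard_image_of_injective _ dg_inj,
    Set.ncard_image_of_injective _ ag_inj, Set.ncard_univ, hu]
  · ring
  · rw [Set.disjoint_left]
    rintro _ ⟨d, rfl⟩ ⟨b, hb⟩
    exact dg_ne_ag d b hb.symm

lemma Gq_conj {A : GL (Fin 4) F} (hA : projAct F A ∈ Gq F)
    {g : Submodule F (Fin 4 → F) → Submodule F (Fin 4 → F)} (hg : g ∈ Gq F) :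
    projAct F A ∘ g ∘ projAct F A⁻¹ ∈ Gq F := by
  obtain ⟨⟨B, rfl⟩, hB⟩ := hg
  refine ⟨⟨A⁻¹ * B * A, ?_⟩, ?_⟩
  · funext W
    simp [projAct_mul]
  · have h1 : projAct F A⁻¹ '' twistedCubic F = twistedCubic F := by
      conv_lhs => rw [← hA.2]
      rw [Set.image_image]
      simp [projAct_inv]
    rw [Set.image_comp, Set.image_comp, h1, hB, hA.2]

lemma Gq_inv {A : GL (Fin 4) F} (hA : projAct F A ∈ Gq F) : projAct F A⁻¹ ∈ Gq F := by
  refine ⟨⟨_, rfl⟩, ?_⟩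
  conv_lhs => rw [← hA.2]
  rw [Set.image_image]
  simp [projAct_inv]

lemma stab_conj {A : GL (Fin 4) F} (hA : projAct F A ∈ Gq F) (m : Submodule F (Fin 4 → F)) :
    lineStab F (projAct F A m) =
      (fun g => projAct F A ∘ g ∘ projAct F A⁻¹) '' lineStab F m := by
  ext f
  constructor
  · rintro ⟨hf, hm⟩
    refine ⟨projAct F A⁻¹ ∘ f ∘ projAct F A, ⟨?_, ?_⟩, ?_⟩
    · have := Gq_conj (Gq_inv hA) hf
      rwa [inv_inv] at this
    · simp only [Function.comp]
      rw [hm, projAct_inv]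
    · funext W
      simp only [Function.comp, projAct_inv']
  · rintro ⟨g, ⟨hg, hm⟩, rfl⟩
    refine ⟨Gq_conj hA hg, ?_⟩
    simp only [Function.comp]
    rw [projAct_inv, hm]

lemma conj_inj (A : GL (Fin 4) F) : Function.Injective
    (fun g : Submodule F (Fin 4 → F) → Submodule F (Fin 4 → F) =>
      projAct F A ∘ g ∘ projAct F A⁻¹) := by
  intro g g' h
  funext W
  have := congrFun h (projAct F A W)
  simp only [Function.comp, projAct_inv] at this
  exact projAct_inj A this

lemma three_ne [Fintype F] (h : Fintype.card F % 3 ≠ 0) : (3 : F) ≠ 0 := by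
  intro h3
  have h0 : ((Fintype.card F : ℕ) : F) = 0 := Nat.cast_card_eq_zero F
  rw [← Nat.div_add_mod (Fintype.card F) 3] at h0
  push_cast at h0
  rw [h3, zero_mul, zero_add] at h0
  have : Fintype.card F % 3 = 1 ∨ Fintype.card F % 3 = 2 := by omega
  rcases this with e | e
  · rw [e] at h0; simp at h0
  · rw [e] at h0
    apply one_ne_zero (α := F)
    push_cast at h0
    linear_combination h3 - h0

end TC

theorem stmt_5 (q : ℕ) (F : Type) [Field F] [Fintype F]
    (hcard : Fintype.card F = q) (hq : 5 ≤ q) (hq3 : q % 3 ≠ 0) :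
    isRealAxis F (Submodule.span F ({![0, 0, 1, 0], ![0, 1, 0, 0]} : Set (Fin 4 → F))) ∧
    {ℓ : Submodule F (Fin 4 → F) | isRealAxis F ℓ} = lineOrbit F (Submodule.span F ({![0, 0, 1, 0], ![0, 1, 0, 0]} : Set (Fin 4 → F))) ∧
    (∀ ℓ : Submodule F (Fin 4 → F), isRealAxis F ℓ → (lineStab F ℓ).ncard = 2 * (q - 1)) ∧
    lineStab F (Submodule.span F ({![0, 0, 1, 0], ![0, 1, 0, 0]} : Set (Fin 4 → F))) =
      {f | ∃ A : GL (Fin 4) F,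
        ((∃ d : F, d ≠ 0 ∧
            (↑A : Matrix (Fin 4) (Fin 4) F) =
              !![1, 0, 0, 0; 0, d, 0, 0; 0, 0, d ^ 2, 0; 0, 0, 0, d ^ 3]) ∨
          (∃ b : F, b ≠ 0 ∧
            (↑A : Matrix (Fin 4) (Fin 4) F) =
              !![0, 0, 0, 1; 0, 0, b, 0; 0, b ^ 2, 0, 0; b ^ 3, 0, 0, 0])) ∧
        f = projAct F A} := by
  subst hcard
  have h3 := TC.three_ne (F := F) hq3
  change isRealAxis F (TC.ell F) ∧ {ℓ | isRealAxis F ℓ} = lineOrbit F (TC.ell F) ∧ _ ∧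
    lineStab F (TC.ell F) = _
  refine ⟨TC.ell_axis, Set.ext (TC.axis_iff hq), ?_, ?_⟩
  · intro m hm
    obtain ⟨f, hf, rfl⟩ := (TC.axis_iff hq m).1 hm
    obtain ⟨A, rfl⟩ := hf.1
    rw [TC.stab_conj hf, Set.ncard_image_of_injective _ (TC.conj_inj A), TC.stab_card hq h3]
  · rw [TC.stab_ell hq h3]
    ext f
    simp only [TC.diag_eq, TC.anti_eq]
    constructor
    · rintro (⟨d, rfl⟩ | ⟨b, rfl⟩)
      · exact ⟨_, Or.inl ⟨d, d.ne_zero, rfl⟩, rfl⟩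
      · exact ⟨_, Or.inr ⟨b, b.ne_zero, rfl⟩, rfl⟩
    · rintro ⟨A, ⟨d, hd, hA⟩ | ⟨b, hb, hA⟩, rfl⟩
      · refine Or.inl ⟨Units.mk0 d hd, ?_⟩
        exact congrArg (projAct F) (Units.ext hA.symm)
      · refine Or.inr ⟨Units.mk0 b hb, ?_⟩
        exact congrArg (projAct F) (Units.ext hA.symm)
end
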